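/- arXiv:2307.11138 — 2 statements merged into one kernel-verified Lean document; each statement's English description precedes it below -/
import Mathlib

section
/- Let N be a positive integer, let E, A be real N×N matrices with E invertible, let δt > 0, let f : ℝ^N → ℝ^N be Lipschitz continuous with constant L ≥ 0 (i.e., ‖f(v) − f(w)‖₂ ≤ L‖v − w‖₂ for all v, w), let g : ℕ → ℝ^N be a given sequence of input vectors, and let x, x̃ : ℕ → ℝ^N be two sequences such that x satisfies the time-discrete recursion E x^k = A x^{k−1} + δt (f(x^{k−1}) + g^k) for all k ≥ 1. Define the residual r^k := A x̃^{k−1} + δt (f(x̃^{k−1}) + g^k) − E x̃^k and the error e^k := x^k − x̃^k. Set ζ := ‖E^{−1}‖₂ and ξ := ‖E^{−1} A‖₂ + δt · L · ‖E^{−1}‖₂ (operator 2-norms). Then for every k ≥ 0, ‖e^k‖₂ ≤ ξ^k ‖e^0‖₂ + Σ_{i=1}^{k} ζ · ξ^{k−i} · ‖r^i‖₂. -/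
open Matrix
open scoped Matrix.Norms.L2Operator

/-- Matrix-vector multiplication, viewed as a map on Euclidean space (so that the
Euclidean 2-norm is used on the result). -/
noncomputable def matVec {N : ℕ} (M : Matrix (Fin N) (Fin N) ℝ)
    (v : EuclideanSpace ℝ (Fin N)) : EuclideanSpace ℝ (Fin N) :=
  (EuclideanSpace.equiv (Fin N) ℝ).symm (M.mulVec v)

/-!
Multiplying the scheme by `E⁻¹` turns it into an explicit iteration of the maps
`v ↦ E⁻¹ (A v + δt (f v + gᵏ))`. They are Lipschitz with constant `ξ`, because the input `gᵏ`
cancels in differences. The approximate solution is a pseudo-orbit of the same maps whose `k`-th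
defect is `E⁻¹ rᵏ`, so that `‖eᵏ⁺¹‖ ≤ ξ ‖eᵏ‖ + ζ ‖rᵏ⁺¹‖`, and the discrete Grönwall inequality
applies.
-/

open scoped NNReal

theorem le_pow_mul_add_sum_of_le_mul_add {R : Type*} [CommSemiring R] [PartialOrder R]
    [IsOrderedRing R] {u b : ℕ → R} {q : R} (hq : 0 ≤ q)
    (hu : ∀ k, u (k + 1) ≤ q * u k + b (k + 1)) (k : ℕ) :
    u k ≤ q ^ k * u 0 + ∑ i ∈ Finset.Icc 1 k, q ^ (k - i) * b i := by
  have gronwall := discrete_gronwall_prod_general (c := fun _ ↦ q) (b := fun k ↦ b (k + 1))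
    (fun n _ ↦ hu n) (fun _ _ ↦ hq) k.zero_le
  have shift := Finset.sum_Ico_add' (fun i ↦ q ^ (k - i) * b i) 0 k 1
  rw [zero_add, Finset.Ico_add_one_right_eq_Icc] at shift
  rw [← shift]
  simpa only [Finset.prod_const, Nat.card_Ico, Nat.sub_zero, mul_comm] using gronwall

theorem dist_orbit_pseudoOrbit_le {α : Type*} [PseudoMetricSpace α] {K : ℝ≥0} {Φ : ℕ → α → α}
    (hΦ : ∀ k, LipschitzWith K (Φ k)) {x y : ℕ → α} {d : ℕ → ℝ}
    (hx : ∀ k, x (k + 1) = Φ k (x k)) (hy : ∀ k, dist (Φ k (y k)) (y (k + 1)) ≤ d (k + 1))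
    (k : ℕ) :
    dist (x k) (y k) ≤ K ^ k * dist (x 0) (y 0) + ∑ i ∈ Finset.Icc 1 k, K ^ (k - i) * d i := by
  refine le_pow_mul_add_sum_of_le_mul_add (u := fun k ↦ dist (x k) (y k)) K.coe_nonneg
    (fun k ↦ ?_) k
  calc dist (x (k + 1)) (y (k + 1))
    _ = dist (Φ k (x k)) (y (k + 1)) := by rw [hx]
    _ ≤ dist (Φ k (x k)) (Φ k (y k)) + dist (Φ k (y k)) (y (k + 1)) := dist_triangle _ _ _
    _ ≤ K * dist (x k) (y k) + d (k + 1) := add_le_add ((hΦ k).dist_le_mul _ _) (hy k)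

section IMEX

variable {𝕜 X Y : Type*} [NontriviallyNormedField 𝕜] [SeminormedAddCommGroup X] [NormedSpace 𝕜 X]
  [SeminormedAddCommGroup Y] [NormedSpace 𝕜 Y]

/-- One step `v ↦ B (A v + τ (f v + g))` of the first-order implicit-explicit scheme with step size
`τ` and input `g`, in explicit form: `B` stands for the inverse of the implicit operator `E`. -/
def imexStep (B : Y →L[𝕜] X) (A : X →L[𝕜] Y) (τ : 𝕜) (f : X → Y) (g : Y) (v : X) : X :=
  B (A v + τ • (f v + g))

theorem lipschitzWith_imexStep (B : Y →L[𝕜] X) (A : X →L[𝕜] Y) (τ : 𝕜) {f : X → Y} {L : ℝ≥0}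
    (hf : LipschitzWith L f) (g : Y) :
    LipschitzWith (‖B ∘L A‖₊ + ‖τ‖₊ * L * ‖B‖₊) (imexStep B A τ f g) := by
  refine LipschitzWith.of_dist_le_mul fun v w ↦ ?_
  have hdiff : imexStep B A τ f g v - imexStep B A τ f g w =
      (B ∘L A) (v - w) + τ • B (f v - f w) := by
    simp only [imexStep, ContinuousLinearMap.comp_apply, map_add, map_sub, map_smul]
    module
  calc dist (imexStep B A τ f g v) (imexStep B A τ f g w)
    _ = ‖(B ∘L A) (v - w) + τ • B (f v - f w)‖ := by rw [dist_eq_norm, hdiff]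
    _ ≤ ‖(B ∘L A) (v - w)‖ + ‖τ‖ * ‖B (f v - f w)‖ := norm_add_le_of_le le_rfl (norm_smul_le _ _)
    _ ≤ ‖B ∘L A‖ * ‖v - w‖ + ‖τ‖ * (‖B‖ * (L * ‖v - w‖)) := by
        gcongr
        · exact (B ∘L A).le_opNorm _
        · exact B.le_opNorm_of_le (hf.norm_sub_le v w)
    _ = (‖B ∘L A‖₊ + ‖τ‖₊ * L * ‖B‖₊ : ℝ≥0) * dist v w := by
        rw [dist_eq_norm]
        push_cast
        ring

theorem imexStep_sub_of_leftInverse {B : Y →L[𝕜] X} {E : X → Y} (hBE : Function.LeftInverse B E)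
    (A : X →L[𝕜] Y) (τ : 𝕜) (f : X → Y) (g : Y) (v w : X) :
    imexStep B A τ f g v - w = B (A v + τ • (f v + g) - E w) := by
  rw [map_sub, hBE, imexStep]

theorem residual_based_error_bound_general {B : Y →L[𝕜] X} {E : X → Y}
    (hBE : Function.LeftInverse B E) (A : X →L[𝕜] Y) (τ : 𝕜) {f : X → Y} {L : ℝ≥0}
    (hf : LipschitzWith L f) {g r : ℕ → Y} {x y : ℕ → X}
    (hx : ∀ k, E (x (k + 1)) = A (x k) + τ • (f (x k) + g (k + 1)))
    (hr : ∀ k, r (k + 1) = A (y k) + τ • (f (y k) + g (k + 1)) - E (y (k + 1))) (k : ℕ) :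
    ‖x k - y k‖ ≤ (‖B ∘L A‖ + ‖τ‖ * L * ‖B‖) ^ k * ‖x 0 - y 0‖ +
      ∑ i ∈ Finset.Icc 1 k, ‖B‖ * (‖B ∘L A‖ + ‖τ‖ * L * ‖B‖) ^ (k - i) * ‖r i‖ := by
  have orbit (k : ℕ) : x (k + 1) = imexStep B A τ f (g (k + 1)) (x k) := by
    rw [imexStep, ← hx, hBE]
  have defect (k : ℕ) :
      dist (imexStep B A τ f (g (k + 1)) (y k)) (y (k + 1)) ≤ ‖B‖ * ‖r (k + 1)‖ := by
    rw [dist_eq_norm, imexStep_sub_of_leftInverse hBE, ← hr]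
    exact B.le_opNorm _
  have bound := dist_orbit_pseudoOrbit_le (d := fun k ↦ ‖B‖ * ‖r k‖)
    (fun k ↦ lipschitzWith_imexStep B A τ hf (g (k + 1))) orbit defect k
  simpa [dist_eq_norm, mul_assoc, mul_left_comm] using bound

end IMEX

theorem matVec_eq_coe_toEuclideanCLM {N : ℕ} (M : Matrix (Fin N) (Fin N) ℝ) :
    matVec M = ⇑(toEuclideanCLM (𝕜 := ℝ) M) :=
  rfl

theorem leftInverse_toEuclideanCLM_inv {n 𝕜 : Type*} [Fintype n] [DecidableEq n] [RCLike 𝕜]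
    {M : Matrix n n 𝕜} (hM : IsUnit M) :
    Function.LeftInverse (toEuclideanCLM (𝕜 := 𝕜) M⁻¹) (toEuclideanCLM (𝕜 := 𝕜) M) := fun v ↦ by
  rw [← mul_apply_eq_comp, ← map_mul,
    nonsing_inv_mul M ((isUnit_iff_isUnit_det M).mp hM), map_one, one_apply_eq_self]

/-- Residual-based error bound for the first-order IMEX time-discrete scheme
(Theorem 2.1 of the paper). -/
theorem residual_based_error_bound
    (N : ℕ) (hN : 0 < N)
    (E A : Matrix (Fin N) (Fin N) ℝ) (hE : IsUnit E)
    (δt : ℝ) (hδt : 0 < δt)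
    (f : EuclideanSpace ℝ (Fin N) → EuclideanSpace ℝ (Fin N))
    (L : ℝ) (hL : 0 ≤ L)
    (hf : ∀ v w : EuclideanSpace ℝ (Fin N), ‖f v - f w‖ ≤ L * ‖v - w‖)
    (g x xt : ℕ → EuclideanSpace ℝ (Fin N))
    (hx : ∀ k, 1 ≤ k →
      matVec E (x k) = matVec A (x (k - 1)) + δt • (f (x (k - 1)) + g k))
    (r : ℕ → EuclideanSpace ℝ (Fin N))
    (hr : ∀ k, r k =
      matVec A (xt (k - 1)) + δt • (f (xt (k - 1)) + g k) - matVec E (xt k))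
    (e : ℕ → EuclideanSpace ℝ (Fin N))
    (he : ∀ k, e k = x k - xt k)
    (ζ ξ : ℝ)
    (hζ : ζ = ‖E⁻¹‖)
    (hξ : ξ = ‖E⁻¹ * A‖ + δt * L * ‖E⁻¹‖) :
    ∀ k, ‖e k‖ ≤ ξ ^ k * ‖e 0‖ + ∑ i ∈ Finset.Icc 1 k, ζ * ξ ^ (k - i) * ‖r i‖ := by
  lift L to ℝ≥0 using hL
  subst hζ hξ
  simp only [matVec_eq_coe_toEuclideanCLM] at hx hr
  intro k
  have bound := residual_based_error_bound_general (y := xt) (leftInverse_toEuclideanCLM_inv hE)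
    (toEuclideanCLM (𝕜 := ℝ) A) δt (lipschitzWith_iff_norm_sub_le.mpr hf)
    (fun k ↦ hx (k + 1) k.succ_pos) (fun k ↦ hr (k + 1)) k
  rwa [← he, ← he, ← ContinuousLinearMap.mul_def, ← map_mul, l2_opNorm_toEuclideanCLM,
    l2_opNorm_toEuclideanCLM, Real.norm_of_nonneg hδt.le] at bound
end

section
/- Let N be a positive integer, let E, A be real N×N matrices with E invertible, let δt > 0, let f : ℝ^N → ℝ^N, let g : ℕ → ℝ^N, let x : ℕ → ℝ^N be given snapshots with defect d^k := E x^k − (A x^{k−1} + δt (f(x^{k−1}) + g^k)), and let x̃ : ℕ → ℝ^N be an approximate solution. Define the residual r^k := A x̃^{k−1} + δt (f(x̃^{k−1}) + g^k) + d^k − E x̃^k and the auxiliary residual r̆^k := A x^{k−1} + δt (f(x^{k−1}) + g^k) + d^k − E x̃^k. Let c ∈ ℝ^N, let x̃_du ∈ ℝ^N with dual residual r_du := −c − Eᵀ x̃_du, and define the true output y^k := cᵀ x^k and the modified output ȳ^k := cᵀ x̃^k − x̃_duᵀ r^k. Then for every k ≥ 1, the exact error representation y^k − ȳ^k = − r_duᵀ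 E^{−1} r̆^k + x̃_duᵀ (r^k − r̆^k) holds. -/
open Matrix

/-!
Adding the defect makes the imposed scheme exact on the snapshots, so the auxiliary residual, whose
explicit part is evaluated at a snapshot, equals `E` applied to the current error. Pairing this
error with `-c = r_du + Eᵀ x̃_du` and moving `E` across the pairing gives the output error.
-/

section

variable {m n R : Type*} [Fintype n] [CommRing R]

/-- The right-hand side `A u + δt (f u + g)` of the imposed implicit-explicit scheme, i.e. its
explicit part. It describes a single time step, with `u` the state before the step, and allows
different state and equation index types. -/
def imexExplicitPart (A : Matrix m n R) (δt : R) (f : (n → R) → m → R) (g : m → R) (u : n → R) :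
    m → R :=
  A *ᵥ u + δt • (f u + g)

/-- The defect `d^k` of two consecutive snapshots `u = x^{k-1}` and `v = x^k`: what the imposed
scheme misses when the snapshots are inserted into it. -/
def imexDefect (E A : Matrix m n R) (δt : R) (f : (n → R) → m → R) (g : m → R) (u v : n → R) :
    m → R :=
  E *ᵥ v - imexExplicitPart A δt f g u

/-- The residual of the scheme corrected by `d`, with explicit part evaluated at `u` and implicit
part at `w = x̃^k`. The choice `u = x̃^{k-1}` gives the residual `r^k`, and `u = x^{k-1}` gives the
auxiliary residual `r̆^k`. -/
def correctedResidual (E A : Matrix m n R) (δt : R) (f : (n → R) → m → R) (g d : m → R)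
    (u w : n → R) : m → R :=
  imexExplicitPart A δt f g u + d - E *ᵥ w

theorem correctedResidual_imexDefect (E A : Matrix m n R) (δt : R) (f : (n → R) → m → R)
    (g : m → R) (u v w : n → R) :
    correctedResidual E A δt f g (imexDefect E A δt f g u v) u w = E *ᵥ (v - w) := by
  rw [correctedResidual, imexDefect, add_sub_cancel, mulVec_sub]

variable [Fintype m]

/-- The residual `r_du` of an approximate solution `z = x̃_du` of the dual system `Eᵀ x_du = -c`. -/
def dualResidual (E : Matrix m n R) (c : n → R) (z : m → R) : n → R :=
  -c - Eᵀ *ᵥ z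

/-- The modified output `ȳ^k`: the output of the approximate state `w = x̃^k`, corrected by its
residual `r` weighted with the approximate dual solution `z`. -/
def modifiedOutput (c : n → R) (z : m → R) (w : n → R) (r : m → R) : R :=
  c ⬝ᵥ w - z ⬝ᵥ r

theorem dotProduct_eq_neg_dualResidual_dotProduct_sub (E : Matrix m n R) (c : n → R) (z : m → R)
    (e : n → R) :
    c ⬝ᵥ e = -(dualResidual E c z ⬝ᵥ e) - z ⬝ᵥ (E *ᵥ e) := by
  have dual_pairing : (Eᵀ *ᵥ z) ⬝ᵥ e = z ⬝ᵥ (E *ᵥ e) := by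
    rw [mulVec_transpose, dotProduct_mulVec]
  rw [dualResidual, sub_dotProduct, neg_dotProduct, dual_pairing]
  ring

theorem dotProduct_sub_modifiedOutput (E : Matrix m n R) (c : n → R) (z : m → R) (v w : n → R)
    (r : m → R) :
    c ⬝ᵥ v - modifiedOutput c z w r =
      -(dualResidual E c z ⬝ᵥ (v - w)) + z ⬝ᵥ (r - E *ᵥ (v - w)) := by
  calc c ⬝ᵥ v - modifiedOutput c z w r
      = c ⬝ᵥ (v - w) + z ⬝ᵥ r := by
        rw [modifiedOutput, dotProduct_sub]
        ring
    _ = -(dualResidual E c z ⬝ᵥ (v - w)) - z ⬝ᵥ (E *ᵥ (v - w)) + z ⬝ᵥ r := by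
        rw [dotProduct_eq_neg_dualResidual_dotProduct_sub E c z]
    _ = -(dualResidual E c z ⬝ᵥ (v - w)) + z ⬝ᵥ (r - E *ᵥ (v - w)) := by
        rw [dotProduct_sub z]
        ring

end

theorem modified_output_error_representation_general {n R : Type*} [Fintype n] [DecidableEq n]
    [CommRing R] {E : Matrix n n R} (hE : IsUnit E) (A : Matrix n n R) (δt : R)
    (f : (n → R) → n → R) (g xPrev x xtPrev xt c xtdu : n → R) :
    let d := imexDefect E A δt f g xPrev x
    let r := correctedResidual E A δt f g d xtPrev xt
    let rb := correctedResidual E A δt f g d xPrev xt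
    c ⬝ᵥ x - modifiedOutput c xtdu xt r =
      -(dualResidual E c xtdu ⬝ᵥ (E⁻¹ *ᵥ rb)) + xtdu ⬝ᵥ (r - rb) := by
  intro d r rb
  have rb_eq : rb = E *ᵥ (x - xt) := correctedResidual_imexDefect E A δt f g xPrev x xt
  have error_eq : E⁻¹ *ᵥ rb = x - xt := by
    let := hE.invertible
    exact inv_mulVec_eq_vec rb_eq
  rw [error_eq, rb_eq]
  exact dotProduct_sub_modifiedOutput E c xtdu x xt r

/-- Exact error representation for the modified output of the defect-corrected scheme:
`y^k − ȳ^k = − r_duᵀ E⁻¹ r̆^k + x̃_duᵀ (r^k − r̆^k)`. -/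
theorem modified_output_error_representation
    (N : ℕ) (hN : 0 < N)
    (E A : Matrix (Fin N) (Fin N) ℝ) (hE : IsUnit E)
    (δt : ℝ) (hδt : 0 < δt)
    (f : EuclideanSpace ℝ (Fin N) → EuclideanSpace ℝ (Fin N))
    (g x xt : ℕ → EuclideanSpace ℝ (Fin N))
    (d : ℕ → EuclideanSpace ℝ (Fin N))
    (hd : ∀ k, 1 ≤ k →
      d k = matVec E (x k) - (matVec A (x (k - 1)) + δt • (f (x (k - 1)) + g k)))
    (r : ℕ → EuclideanSpace ℝ (Fin N))
    (hr : ∀ k, 1 ≤ k →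
      r k = matVec A (xt (k - 1)) + δt • (f (xt (k - 1)) + g k) + d k - matVec E (xt k))
    (rb : ℕ → EuclideanSpace ℝ (Fin N))
    (hrb : ∀ k, 1 ≤ k →
      rb k = matVec A (x (k - 1)) + δt • (f (x (k - 1)) + g k) + d k - matVec E (xt k))
    (c xtdu : EuclideanSpace ℝ (Fin N))
    (rdu : EuclideanSpace ℝ (Fin N))
    (hrdu : rdu = -c - matVec E.transpose xtdu)
    (y ybar : ℕ → ℝ)
    (hy : ∀ k, y k = c ⬝ᵥ x k)
    (hybar : ∀ k, ybar k = c ⬝ᵥ xt k - xtdu ⬝ᵥ r k) :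
    ∀ k, 1 ≤ k →
      y k - ybar k = -(rdu ⬝ᵥ matVec E⁻¹ (rb k)) + xtdu ⬝ᵥ (r k - rb k) := by
  intro k hk
  rw [hy, hybar, hr k hk, hrb k hk, hd k hk, hrdu]
  -- In coordinates the Euclidean operations are definitionally those of functions.
  exact modified_output_error_representation_general hE A δt (fun v => f (WithLp.toLp 2 v))
    (g k) (x (k - 1)) (x k) (xt (k - 1)) (xt k) c xtdu
end
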